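/- Let A be a 2n×2n real symmetric positive-semidefinite matrix. If there exists a symplectic matrix S ∈ ℝ^{2n×2n} and a diagonal matrix D = diag(d_1, …, d_n) with nonnegative entries such that Sᵀ A S = [[D, 0], [0, D]], then the kernel of A is a symplectic subspace of ℝ^{2n} (or the zero subspace, which is trivially symplectic). -/

import Mathlib

/-!
`S` is invertible and preserves the symplectic form, so it is enough to look at the kernel of the
normal form `L = diag(D, D)`. Since `L` commutes with `J`, its kernel is stable under `J`. Writing a
nonzero `x ∈ ker A` as `S u` with `u ∈ ker L`, the vector `y = -|u|⁻² S J u` lies in `ker A`, and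
`xᵀ J y = -|u|⁻² uᵀ J J u = 1`.
-/

open Matrix

/-- The standard symplectic matrix `J_{2n}`. -/
noncomputable def symplJ (n : ℕ) : Matrix (Fin n ⊕ Fin n) (Fin n ⊕ Fin n) ℝ :=
  Matrix.fromBlocks 0 1 (-1) 0

/-- A subspace `W ⊆ ℝ^{2n}` is symplectic (the zero subspace satisfies this
trivially). -/
def IsSymplecticSubspace {n : ℕ} (W : Submodule ℝ (Fin n ⊕ Fin n → ℝ)) : Prop :=
  ∀ x ∈ W, x ≠ 0 → ∃ y ∈ W, x ⬝ᵥ (symplJ n).mulVec y = 1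

theorem symplJ_mul_self (n : ℕ) : symplJ n * symplJ n = -1 := by
  rw [← fromBlocks_one, fromBlocks_neg]
  simp [symplJ, fromBlocks_multiply]

theorem fromBlocks_diagonal_mul_symplJ {n : ℕ} (d : Fin n → ℝ) :
    fromBlocks (diagonal d) 0 0 (diagonal d) * symplJ n =
      symplJ n * fromBlocks (diagonal d) 0 0 (diagonal d) := by
  rw [symplJ, fromBlocks_multiply, fromBlocks_multiply]
  simp

/-- If a symmetric positive-semidefinite matrix `A` admits a Williamson diagonal
form `Sᵀ A S = diag(D, D)` with `S` symplectic and `D` diagonal nonnegative, then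
the kernel of `A` is a symplectic subspace. -/
theorem symplectic_kernel_of_williamson_form
    {n : ℕ}
    (A : Matrix (Fin n ⊕ Fin n) (Fin n ⊕ Fin n) ℝ) (hA : A.PosSemidef)
    (S : Matrix (Fin n ⊕ Fin n) (Fin n ⊕ Fin n) ℝ)
    (hS : Sᵀ * symplJ n * S = symplJ n)
    (d : Fin n → ℝ) (hd : ∀ i, 0 ≤ d i)
    (hdiag : Sᵀ * A * S = Matrix.fromBlocks (Matrix.diagonal d) 0 0 (Matrix.diagonal d)) :
    IsSymplecticSubspace (LinearMap.ker A.mulVecLin) := by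
  set L := fromBlocks (diagonal d) 0 0 (diagonal d) with hL
  set T := -(symplJ n * Sᵀ * symplJ n) with hT
  have hTS : T * S = 1 := by
    have : T * S = -(symplJ n * (Sᵀ * symplJ n * S)) := by
      simp only [hT, Matrix.neg_mul, Matrix.mul_assoc]
    rw [this, hS, symplJ_mul_self, neg_neg]
  have hST : S * T = 1 := mul_eq_one_comm.mp hTS
  have hTt : Tᵀ * Sᵀ = 1 := by rw [← transpose_mul, hST, transpose_one]
  have hker : ∀ w, A *ᵥ (S *ᵥ w) = 0 ↔ L *ᵥ w = 0 := by
    intro w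
    rw [← hdiag, ← mulVec_mulVec, ← mulVec_mulVec]
    refine ⟨fun h => by rw [h, mulVec_zero], fun h => ?_⟩
    have h' := congrArg (Tᵀ *ᵥ ·) h
    simpa [mulVec_mulVec, ← Matrix.mul_assoc, hTt] using h'
  intro x hx hx0
  rw [LinearMap.mem_ker, mulVecLin_apply] at hx
  obtain ⟨u, rfl⟩ : ∃ u, x = S *ᵥ u := ⟨T *ᵥ x, by rw [mulVec_mulVec, hST, one_mulVec]⟩
  have hu0 : u ⬝ᵥ u ≠ 0 := by
    intro h
    rw [dotProduct_self_eq_zero] at h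
    exact hx0 (by rw [h, mulVec_zero])
  have hu := (hker u).mp hx
  refine ⟨S *ᵥ (-(u ⬝ᵥ u)⁻¹ • (symplJ n *ᵥ u)), ?_, ?_⟩
  · rw [LinearMap.mem_ker, mulVecLin_apply, hker, mulVec_smul, mulVec_mulVec,
      fromBlocks_diagonal_mul_symplJ, ← mulVec_mulVec, ← hL, hu, mulVec_zero, smul_zero]
  · have hform : ∀ w, (S *ᵥ u) ⬝ᵥ symplJ n *ᵥ (S *ᵥ w) = u ⬝ᵥ symplJ n *ᵥ w := by
      intro w
      conv_rhs => rw [← hS, ← mulVec_mulVec, ← mulVec_mulVec, dotProduct_mulVec, vecMul_transpose]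
    rw [hform, mulVec_smul, mulVec_mulVec, symplJ_mul_self, neg_mulVec, one_mulVec]
    simp [hu0]
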